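/- If T is an infinite indecomposable tournament, then there exist a real a > 0 and a real c > 1 such that φ_T(n) ≥ a·cⁿ for all natural numbers n. -/

import Mathlib

/-!
An infinite indecomposable tournament has arbitrarily large subtournaments of one of two shapes,
each of which alone forces an exponential profile.

*Marked pairs* (`MarkedPair`). A transitive chain `a 0 → a 1 → ⋯`, vertices `b i` whose adjacency
to `a j` depends (nontrivially) on the order of `i` and `j` only, and a vertex `c` that tells the
`a i` from the `b i`. Between two subsets that contain `c` and the whole chain, an isomorphism
fixing `c` is the identity (`MarkedPair.iso_eq`), so the `2 ^ m` ways of selecting one vertex from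
each `{b (2 * i), b (2 * i + 1)}`, `i < m`, are pairwise distinguished once `c` is marked.
Forgetting the mark costs at most a factor `n` (`card_le_mul_profile`).

*Sums of 3-cycles along `ω`* (`CycleSum`). Here one keeps one vertex of every cycle and completes
some of the cycles; isomorphisms respect the order of the blocks.

To find these shapes, take (up to reversing all edges) an infinite increasing chain
`x 0 → x 1 → ⋯` and put `p i = x (2 * i)`, `q i = x (2 * i + 1)`. By indecomposability each
interval `{p i, q i} ∪ {y | p i → y → q i}` shares two vertices `a i → b i` with a 3-cycle
`a i → b i → c i → a i` (`exists_cycle`): the interval is neither everything nor autonomous. By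
Ramsey's theorem the five sequences may be assumed pairwise homogeneous. Suppose the profile is not
exponential, so that long marked pairs do not exist. Then two homogeneous sequences, one of which
is an increasing chain, are either interleaved transitively (`ChainPair`) or one dominates the
other (`Homog.dichotomy`). It follows that a sequence `z` with `u i → z i → w i`, for interleaved
`u` and `w`, is interleaved with both, since otherwise some vertex `z i` would alternate many times
with respect to the chain formed by `u` and `w` and would mark a long pair
(`ChainPair.squeeze`). Applying this to `p → a → q`, then `a → b → q`, then `b → c → a` shows that
the 3-cycles `(a i, b i, c i)` form a sum along `ω`, which has exponential profile after all.
-/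

universe u v

/-- `r` is a tournament relation on `V`: irreflexive and, for distinct vertices,
exactly one of the two directed edges is present. -/
def IsTournament {V : Type u} (r : V → V → Prop) : Prop :=
  (∀ x, ¬ r x x) ∧ ∀ x y : V, x ≠ y → (r x y ↔ ¬ r y x)

/-- A subset `A` is autonomous in the tournament `r`. -/
def Autonomous {V : Type u} (r : V → V → Prop) (A : Set V) : Prop :=
  ∀ x ∈ A, ∀ x' ∈ A, ∀ y ∉ A, (r x y ↔ r x' y)

/-- A subset `A` is acyclic: it contains no 3-cycle. -/
def AcyclicSet {V : Type u} (r : V → V → Prop) (A : Set V) : Prop :=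
  ¬ ∃ a ∈ A, ∃ b ∈ A, ∃ c ∈ A, r a b ∧ r b c ∧ r c a

/-- The acyclic component of a vertex `x`: the union of all acyclic autonomous
subsets containing `x`. -/
def acyclicComponent {V : Type u} (r : V → V → Prop) (x : V) : Set V :=
  ⋃₀ {A : Set V | x ∈ A ∧ Autonomous r A ∧ AcyclicSet r A}

/-- `A` is an acyclic component of the tournament `r`. -/
def IsAcyclicComponent {V : Type u} (r : V → V → Prop) (A : Set V) : Prop :=
  ∃ x, A = acyclicComponent r x

/-- A tournament is acyclically indecomposable if every acyclic autonomous subset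
has at most one element. -/
def AcyclicallyIndecomposable {V : Type u} (r : V → V → Prop) : Prop :=
  ∀ A : Set V, Autonomous r A → AcyclicSet r A → A.Subsingleton

/-- The type of acyclic components of `r`. -/
def AcComp {V : Type u} (r : V → V → Prop) : Type u :=
  {A : Set V // IsAcyclicComponent r A}

/-- The quotient tournament `Ť` on the set of acyclic components. -/
def quotRel {V : Type u} (r : V → V → Prop) : AcComp r → AcComp r → Prop :=
  fun A B => A ≠ B ∧ ∃ x ∈ A.val, ∃ y ∈ B.val, r x y

/-- The lexicographical sum of the tournaments `rels i` indexed by the tournament `d`. -/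
def lexSumRel {I : Type u} {F : I → Type v} (d : I → I → Prop)
    (rels : ∀ i, F i → F i → Prop) : (Σ i, F i) → (Σ i, F i) → Prop :=
  fun p q => (p.1 ≠ q.1 ∧ d p.1 q.1) ∨
    ∃ h : p.1 = q.1, rels q.1 (cast (congrArg F h) p.2) q.2

/-- The subtournaments induced on the finite sets `s` and `t` are isomorphic. -/
def InducedIso {V : Type u} (r : V → V → Prop) (s t : Finset V) : Prop :=
  ∃ e : {x // x ∈ s} ≃ {x // x ∈ t},
    ∀ a b : {x // x ∈ s}, r a.val b.val ↔ r (e a).val (e b).val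

/-- The profile of a tournament: the number of isomorphism classes of subtournaments
induced on `n`-element subsets of the vertex set. -/
noncomputable def profile {V : Type u} (r : V → V → Prop) (n : ℕ) : ℕ :=
  Nat.card (Quot (fun s t : {w : Finset V // w.card = n} => InducedIso r s.val t.val))

/-- `r` is (isomorphic to) a lexicographical sum of acyclic tournaments indexed by a
finite tournament. -/
def IsFiniteLexSumOfAcyclic {V : Type u} (r : V → V → Prop) : Prop :=
  ∃ (I : Type) (d : I → I → Prop) (F : I → Type u)
    (rels : ∀ i, F i → F i → Prop),
    Finite I ∧ IsTournament d ∧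
    (∀ i, IsTournament (rels i) ∧ AcyclicSet (rels i) Set.univ) ∧
    ∃ e : V ≃ (Σ i, F i), ∀ x y, r x y ↔ lexSumRel d rels (e x) (e y)

/-- A bundled tournament (vertex type together with its edge relation). -/
structure Tour : Type 1 where
  V : Type
  rel : V → V → Prop

/-- `S` is embeddable in the tournament `r`: `S` is isomorphic to a subtournament of `r`. -/
def Tour.EmbedsIn {W : Type u} (S : Tour) (r : W → W → Prop) : Prop :=
  ∃ f : S.V → W, Function.Injective f ∧ ∀ x y, S.rel x y ↔ r (f x) (f y)

/-- The profile of a bundled tournament. -/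
noncomputable def Tour.profile (T : Tour) (n : ℕ) : ℕ := _root_.profile T.rel n

/-- The quotient tournament `Ť` of a bundled tournament, on its acyclic components. -/
def Tour.check (T : Tour) : Tour := ⟨AcComp T.rel, quotRel T.rel⟩

/-- The tournament `C3[C]` for an acyclic tournament `C = (A, lt)`. -/
def c3Rel {A : Type} (lt : A → A → Prop) : A × Fin 3 → A × Fin 3 → Prop :=
  fun p q => lt p.1 q.1 ∨ (p.1 = q.1 ∧
    ((p.2 = 0 ∧ q.2 = 1) ∨ (p.2 = 1 ∧ q.2 = 2) ∨ (p.2 = 2 ∧ q.2 = 0)))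

/-- The tournament `V[C]` for an acyclic tournament `C = (A, lt)`; `none` is the extra vertex. -/
def vRel {A : Type} (lt : A → A → Prop) (p q : Option (A × Fin 2)) : Prop :=
  match p, q with
  | some p, some q => lt p.1 q.1 ∨ (p.1 = q.1 ∧ p.2 = 0 ∧ q.2 = 1)
  | none, some q => q.2 = 0
  | some p, none => p.2 = 1
  | none, none => False

/-- The tournament `T[C]` for an acyclic tournament `C = (A, lt)`. -/
def tRel {A : Type} (lt : A → A → Prop) : A × Fin 2 → A × Fin 2 → Prop :=
  fun p q =>
    (p.2 = 0 ∧ q.2 = 0 ∧ lt p.1 q.1) ∨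
    (p.1 = q.1 ∧ p.2 = 0 ∧ q.2 = 1) ∨
    (p.2 = 1 ∧ q.2 = 1 ∧ lt p.1 q.1) ∨
    (p.2 = 1 ∧ q.2 = 0 ∧ lt q.1 p.1) ∨
    (p.2 = 0 ∧ q.2 = 1 ∧ lt q.1 p.1)

/-- The tournament `U[C]` for an acyclic tournament `C = (A, lt)`. -/
def uRel {A : Type} (lt : A → A → Prop) : A × Fin 2 → A × Fin 2 → Prop :=
  fun p q =>
    (p.2 = 0 ∧ q.2 = 0 ∧ lt p.1 q.1) ∨
    (p.1 = q.1 ∧ p.2 = 0 ∧ q.2 = 1) ∨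
    (p.2 = 1 ∧ q.2 = 1 ∧ lt q.1 p.1) ∨
    (p.2 = 0 ∧ q.2 = 1 ∧ lt p.1 q.1) ∨
    (p.2 = 1 ∧ q.2 = 0 ∧ lt p.1 q.1)

/-- The tournament `H[C]` for an acyclic tournament `C = (A, lt)`. -/
def hRel {A : Type} (lt : A → A → Prop) : A × Fin 2 → A × Fin 2 → Prop :=
  fun p q =>
    (p.2 = 0 ∧ q.2 = 0 ∧ lt p.1 q.1) ∨
    (p.1 = q.1 ∧ p.2 = 0 ∧ q.2 = 1) ∨
    (p.2 = 1 ∧ q.2 = 1 ∧ lt p.1 q.1) ∨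
    (p.2 = 1 ∧ q.2 = 0 ∧ lt q.1 p.1) ∨
    (p.2 = 1 ∧ q.2 = 0 ∧ lt p.1 q.1)

/-- The tournament `K[C]` for an acyclic tournament `C = (A, lt)`. -/
def kRel {A : Type} (lt : A → A → Prop) : A × Fin 2 → A × Fin 2 → Prop :=
  fun p q =>
    (p.2 = 0 ∧ q.2 = 0 ∧ lt p.1 q.1) ∨
    (p.1 = q.1 ∧ p.2 = 0 ∧ q.2 = 1) ∨
    (p.2 = 1 ∧ q.2 = 1 ∧ lt q.1 p.1) ∨
    (p.2 = 1 ∧ q.2 = 0 ∧ lt q.1 p.1) ∨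
    (p.2 = 1 ∧ q.2 = 0 ∧ lt p.1 q.1)

def c3Tour (A : Type) (lt : A → A → Prop) : Tour := ⟨A × Fin 3, c3Rel lt⟩
def vTour (A : Type) (lt : A → A → Prop) : Tour := ⟨Option (A × Fin 2), vRel lt⟩
def tTour (A : Type) (lt : A → A → Prop) : Tour := ⟨A × Fin 2, tRel lt⟩
def uTour (A : Type) (lt : A → A → Prop) : Tour := ⟨A × Fin 2, uRel lt⟩
def hTour (A : Type) (lt : A → A → Prop) : Tour := ⟨A × Fin 2, hRel lt⟩
def kTour (A : Type) (lt : A → A → Prop) : Tour := ⟨A × Fin 2, kRel lt⟩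

/-- The order type `ω`: the natural numbers with the usual strict order. -/
def omegaLT : ℕ → ℕ → Prop := fun m n => m < n

/-- The order type `ω*`: the natural numbers with the reversed strict order. -/
def omegaStarLT : ℕ → ℕ → Prop := fun m n => n < m

/-- The set `𝔅` of twelve tournaments. -/
def frakB : List Tour :=
  [c3Tour ℕ omegaLT, vTour ℕ omegaLT, tTour ℕ omegaLT,
   uTour ℕ omegaLT, hTour ℕ omegaLT, kTour ℕ omegaLT,
   c3Tour ℕ omegaStarLT, vTour ℕ omegaStarLT, tTour ℕ omegaStarLT,
   uTour ℕ omegaStarLT, hTour ℕ omegaStarLT, kTour ℕ omegaStarLT]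

/-- The set `𝔅_{n̲}` of six tournaments built on the acyclic tournament `({0,…,n−1},<)`. -/
def frakBn (n : ℕ) : List Tour :=
  [c3Tour (Fin n) (· < ·), vTour (Fin n) (· < ·), tTour (Fin n) (· < ·),
   uTour (Fin n) (· < ·), hTour (Fin n) (· < ·), kTour (Fin n) (· < ·)]

/-- A tournament is indecomposable if its only autonomous subsets are the trivial ones. -/
def Indecomposable {V : Type u} (r : V → V → Prop) : Prop :=
  ∀ A : Set V, Autonomous r A → A = ∅ ∨ (∃ x, A = {x}) ∨ A = Set.univ

/-! ### Isomorphism classes and counting -/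

lemma InducedIso.symm' {V : Type u} {r : V → V → Prop} {s t : Finset V}
    (h : InducedIso r s t) : InducedIso r t s := by
  obtain ⟨e, he⟩ := h
  exact ⟨e.symm, fun a b => by simpa using (he (e.symm a) (e.symm b)).symm⟩

lemma InducedIso.trans' {V : Type u} {r : V → V → Prop} {s t w : Finset V}
    (h : InducedIso r s t) (h' : InducedIso r t w) : InducedIso r s w := by
  obtain ⟨e, he⟩ := h
  obtain ⟨e', he'⟩ := h'
  exact ⟨e.trans e', fun a b => (he a b).trans (he' _ _)⟩

/-- Isomorphism of induced subtournaments is an equivalence, so equality in the quotient that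
defines the profile is the same as isomorphism. -/
lemma inducedIso_of_quot_eq {V : Type u} {r : V → V → Prop} {n : ℕ}
    {s t : {w : Finset V // w.card = n}}
    (h : Quot.mk (fun s t : {w : Finset V // w.card = n} => InducedIso r s.val t.val) s =
      Quot.mk _ t) : InducedIso r s.val t.val := by
  have h1 := Quot.eqvGen_exact h
  induction h1 with
  | rel _ _ h => assumption
  | refl x => exact ⟨Equiv.refl _, fun _ _ => Iff.rfl⟩
  | symm _ _ _ ih => exact (ih (Quot.eqvGen_sound (by assumption))).symm'
  | trans _ _ _ h1 h2 ih1 ih2 =>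
    exact (ih1 (Quot.eqvGen_sound h1)).trans' (ih2 (Quot.eqvGen_sound h2))

/-- There are finitely many isomorphism classes of `n`-element tournaments, so the `Nat.card`
in the definition of the profile is a genuine cardinality. -/
lemma finite_isoClasses {V : Type u} (r : V → V → Prop) (n : ℕ) :
    Finite (Quot (fun s t : {w : Finset V // w.card = n} => InducedIso r s.val t.val)) := by
  classical
  let en : ∀ w : {w : Finset V // w.card = n}, {x // x ∈ w.val} ≃ Fin n := fun w =>
    w.val.equivFinOfCardEq w.2
  let code : {w : Finset V // w.card = n} → (Fin n → Fin n → Prop) := fun w i j =>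
    r ((en w).symm i).val ((en w).symm j).val
  have key : ∀ s t, code s = code t → InducedIso r s.val t.val := by
    intro s t h
    refine ⟨(en s).trans (en t).symm, fun a b => ?_⟩
    have := congrFun (congrFun h (en s a)) (en s b)
    simpa [code] using this
  refine Finite.of_injective (fun q => code q.out) fun q q' h => ?_
  rw [← Quot.out_eq q, ← Quot.out_eq q']
  exact Quot.sound (key _ _ h)

/-- A family of `n`-element sets sharing a vertex `c`, no two of which are isomorphic by an
isomorphism fixing `c`, has at most `n` members in each isomorphism class: a member is
determined by the image of `c` in a representative of the class. -/
lemma card_le_mul_profile {V : Type u} (r : V → V → Prop) {ι : Type} [Fintype ι] {n : ℕ}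
    (S : ι → Finset V) (hS : ∀ f, (S f).card = n) (c : V) (hc : ∀ f, c ∈ S f)
    (hrec : ∀ f g, ∀ e : {x // x ∈ S f} ≃ {x // x ∈ S g},
      (∀ a b, r a.val b.val ↔ r (e a).val (e b).val) → e ⟨c, hc f⟩ = ⟨c, hc g⟩ → f = g) :
    Fintype.card ι ≤ n * profile r n := by
  classical
  have := finite_isoClasses r n
  have := Fintype.ofFinite
    (Quot (fun s t : {w : Finset V // w.card = n} => InducedIso r s.val t.val))
  let F : ι → Quot (fun s t : {w : Finset V // w.card = n} => InducedIso r s.val t.val) :=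
    fun f => Quot.mk _ ⟨S f, hS f⟩
  have h1 : (Finset.univ : Finset ι).card ≤ n * (Finset.univ.image F).card := by
    refine Finset.card_le_mul_card_image _ _ fun q hq => ?_
    obtain ⟨g, -, rfl⟩ := Finset.mem_image.1 hq
    have hiso : ∀ f, F f = F g → InducedIso r (S f) (S g) := fun f h =>
      inducedIso_of_quot_eq h
    choose e he using hiso
    refine le_of_le_of_eq (Finset.card_le_card_of_injOn (t := S g)
      (fun f => if h : F f = F g then (e f h ⟨c, hc f⟩ : V) else c) ?_ ?_) (hS g)
    · intro f hf
      have hf : F f = F g := by simpa using hf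
      simp [hf]
    · intro f hf f' hf' h
      have hf : F f = F g := by simpa using hf
      have hf' : F f' = F g := by simpa using hf'
      simp only [hf, hf', dif_pos] at h
      have h : e f hf ⟨c, hc f⟩ = e f' hf' ⟨c, hc f'⟩ := Subtype.ext h
      refine hrec f f' ((e f hf).trans (e f' hf').symm) (fun a b => ?_) ?_
      · rw [he f hf a b]
        simpa using
          (he f' hf' ((e f' hf').symm (e f hf a)) ((e f' hf').symm (e f hf b))).symm
      · simp [h]
  rw [Finset.card_univ] at h1
  refine h1.trans (Nat.mul_le_mul_left _ ?_)
  rw [profile, Nat.card_eq_fintype_card]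
  exact Finset.card_le_univ _

/-- The profile of `r` grows at least exponentially. -/
def ExpGrowth {V : Type u} (r : V → V → Prop) : Prop :=
  ∃ a c : ℝ, 0 < a ∧ 1 < c ∧ ∀ n : ℕ, a * c ^ n ≤ (profile r n : ℝ)

/-- It suffices to have `2 ^ m ≤ n * profile r n` for `m` about `n / 4`: the polynomial factor is
absorbed by lowering the growth rate. -/
lemma expGrowth_of_two_pow_le {V : Type u} {r : V → V → Prop}
    (h : ∀ n m : ℕ, 0 < n → 4 * m + 1 ≤ n → 2 ^ m ≤ n * profile r n) : ExpGrowth r := by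
  refine ⟨1 / 32, 1 + 1 / 16, by norm_num, by norm_num, fun n => ?_⟩
  rcases Nat.eq_zero_or_pos n with rfl | hn
  · have := finite_isoClasses r 0
    have : Nonempty (Quot (fun s t : {w : Finset V // w.card = 0} =>
        InducedIso r s.val t.val)) := ⟨Quot.mk _ ⟨∅, rfl⟩⟩
    have h1 : 1 ≤ profile r 0 := Nat.card_pos
    have h2 : (1 : ℝ) ≤ profile r 0 := by exact_mod_cast h1
    norm_num
    linarith
  · obtain ⟨m, hm1, hm2⟩ : ∃ m, 4 * m + 1 ≤ n ∧ n ≤ 4 * m + 4 :=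
      ⟨(n - 1) / 4, by omega, by omega⟩
    have h1 : (2 : ℝ) ^ m ≤ n * profile r n := by exact_mod_cast h n m hn hm1
    have hb : (n : ℝ) / 16 ≤ (1 + 1 / 16) ^ n := by
      have := one_add_mul_le_pow (a := (1 / 16 : ℝ)) (by norm_num) n
      linarith
    -- the growth rate `17 / 16` is chosen so that its eighth power is at most `2`
    have hc : ((1 + 1 / 16 : ℝ) ^ n) * (1 + 1 / 16) ^ n ≤ 2 * 2 ^ m := by
      calc ((1 + 1 / 16 : ℝ) ^ n) * (1 + 1 / 16) ^ n = (1 + 1 / 16) ^ (n + n) := by ring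
        _ ≤ (1 + 1 / 16) ^ (8 * (m + 1)) :=
            pow_le_pow_right₀ (by norm_num) (by omega)
        _ = ((1 + 1 / 16) ^ 8) ^ (m + 1) := by rw [pow_mul]
        _ ≤ 2 ^ (m + 1) := pow_le_pow_left₀ (by norm_num) (by norm_num) _
        _ = 2 * 2 ^ m := by ring
    have hn' : (0 : ℝ) < n := by exact_mod_cast hn
    have hp : (0 : ℝ) < (1 + 1 / 16 : ℝ) ^ n := by positivity
    have h3 : (n : ℝ) * (1 / 32 * (1 + 1 / 16 : ℝ) ^ n) ≤ n * profile r n := by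
      nlinarith [mul_le_mul_of_nonneg_right hb hp.le]
    exact le_of_mul_le_mul_left h3 hn'

/-! ### Marked pairs -/

lemma IsTournament.asymm {V : Type u} {r : V → V → Prop} (hT : IsTournament r) {x y : V}
    (h : r x y) : ¬ r y x := by
  rcases eq_or_ne x y with rfl | hne
  · exact hT.1 x
  · exact (hT.2 x y hne).1 h

lemma IsTournament.ne {V : Type u} {r : V → V → Prop} (hT : IsTournament r) {x y : V}
    (h : r x y) : x ≠ y := by
  rintro rfl
  exact hT.1 x h

lemma IsTournament.of_not {V : Type u} {r : V → V → Prop} (hT : IsTournament r) {x y : V}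
    (hne : x ≠ y) (h : ¬ r x y) : r y x :=
  (hT.2 y x hne.symm).2 h

/-- A strictly increasing self-map of an initial segment of `ℕ` is the identity. -/
lemma eq_id_of_strictMono {N : ℕ} {p : ℕ → ℕ} (hp : ∀ i < N, p i < N)
    (h : ∀ i j, i < j → j < N → p i < p j) : ∀ i < N, p i = i := by
  have h1 : ∀ i, i < N → i ≤ p i := by
    intro i
    induction i with
    | zero => intro _; exact Nat.zero_le _
    | succ i ih =>
      intro hi
      have := ih (by omega)
      have := h i (i + 1) (by omega) hi
      omega
  have h2 : ∀ k, ∀ i, i + k + 1 = N → p i ≤ i := by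
    intro k
    induction k with
    | zero =>
      intro i hi
      have := hp i (by omega)
      omega
    | succ k ih =>
      intro i hi
      have := ih (i + 1) (by omega)
      have := h i (i + 1) (by omega) (by omega)
      omega
  intro i hi
  have := h1 i hi
  have := h2 (N - 1 - i) i (by omega)
  omega

/-- A transitive chain `a 0 → a 1 → ⋯` of length `N`, further vertices `b 0, …, b (N - 1)`, and
a vertex `c` telling the `a i` from the `b i`. Whether `a i → b j` holds depends only on the
order of `i` and `j` (`P` for `i < j`, `Q` for `i = j`, `R` for `i > j`), and really depends
on it. -/
structure MarkedPair {V : Type u} (r : V → V → Prop) (N : ℕ) (c : V) (a b : ℕ → V)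
    (s P Q R : Prop) : Prop where
  ne_a : ∀ i < N, a i ≠ c
  ne_b : ∀ i < N, b i ≠ c
  ca : ∀ i < N, (r c (a i) ↔ s)
  cb : ∀ i < N, (r c (b i) ↔ ¬ s)
  chain : ∀ i j, i < j → j < N → r (a i) (a j)
  lt : ∀ i j, i < j → j < N → (r (a i) (b j) ↔ P)
  diag : ∀ i < N, (r (a i) (b i) ↔ Q)
  gt : ∀ i j, i < j → j < N → (r (a j) (b i) ↔ R)
  nontriv : ¬ ((P ↔ Q) ∧ (Q ↔ R))

section MarkedPair

variable {V : Type u} {r : V → V → Prop} {N : ℕ} {c : V} {a b : ℕ → V} {s P Q R : Prop}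

/-- The adjacencies of `b i` to the chain determine `i`. -/
lemma MarkedPair.b_rigid (h : MarkedPair r N c a b s P Q R) {i j : ℕ} (hi : i < N) (hj : j < N)
    (hij : ∀ k < N, (r (a k) (b i) ↔ r (a k) (b j))) : i = j := by
  have key : ∀ i j, i < j → j < N → ¬ ∀ k < N, (r (a k) (b i) ↔ r (a k) (b j)) := by
    intro i j hlt hj hij
    have h1 := hij i (by omega)
    have h2 := hij j hj
    rw [h.diag i (by omega), h.lt i j hlt hj] at h1
    rw [h.diag j hj, h.gt i j hlt hj] at h2
    exact h.nontriv ⟨h1.symm, h2.symm⟩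
  rcases lt_trichotomy i j with hlt | heq | hlt
  · exact absurd hij (key i j hlt hj)
  · exact heq
  · exact absurd (fun k hk => (hij k hk).symm) (key j i hlt hi)

lemma MarkedPair.b_inj (h : MarkedPair r N c a b s P Q R) {i j : ℕ} (hi : i < N) (hj : j < N)
    (hij : b i = b j) : i = j :=
  h.b_rigid hi hj fun k _ => by rw [hij]

lemma MarkedPair.a_inj (hT : IsTournament r) (h : MarkedPair r N c a b s P Q R) {i j : ℕ}
    (hi : i < N) (hj : j < N) (hij : a i = a j) : i = j := by
  rcases lt_trichotomy i j with hlt | heq | hlt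
  · exact absurd hij (hT.ne (h.chain i j hlt hj))
  · exact heq
  · exact absurd hij.symm (hT.ne (h.chain j i hlt hi))

lemma MarkedPair.a_ne_b (h : MarkedPair r N c a b s P Q R) {i j : ℕ}
    (hi : i < N) (hj : j < N) : a i ≠ b j := by
  intro hij
  have h1 := h.ca i hi
  have h2 := h.cb j hj
  rw [hij] at h1
  tauto

/-- Between sets that contain `c` and the whole chain, every isomorphism fixing `c` is the
identity: it permutes the chain increasingly, and each `b j` is determined by its adjacencies
to the chain. -/
lemma MarkedPair.iso_eq (hT : IsTournament r) (h : MarkedPair r N c a b s P Q R)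
    {S S' : Finset V} (hc : c ∈ S) (hc' : c ∈ S') (ha : ∀ i < N, a i ∈ S)
    (hS : ∀ v ∈ S, v = c ∨ (∃ i < N, v = a i) ∨ ∃ i < N, v = b i)
    (hS' : ∀ v ∈ S', v = c ∨ (∃ i < N, v = a i) ∨ ∃ i < N, v = b i)
    (e : {x // x ∈ S} ≃ {x // x ∈ S'})
    (he : ∀ x y, r x.val y.val ↔ r (e x).val (e y).val) (hec : e ⟨c, hc⟩ = ⟨c, hc'⟩) :
    ∀ v : {x // x ∈ S}, (e v).val = v.val := by
  have hne : ∀ v : {x // x ∈ S}, v.val ≠ c → (e v).val ≠ c := by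
    intro v hv hev
    have : e v = e ⟨c, hc⟩ := by rw [hec]; exact Subtype.ext hev
    exact hv (congrArg Subtype.val (e.injective this))
  have hadj : ∀ v : {x // x ∈ S}, r c v.val ↔ r c (e v).val := by
    intro v
    have := he ⟨c, hc⟩ v
    rwa [hec] at this
  have h1 : ∀ i, ∃ j, ∀ hi : i < N, j < N ∧ (e ⟨a i, ha i hi⟩).val = a j := by
    intro i
    by_cases hi : i < N
    · have h1 := hadj ⟨a i, ha i hi⟩
      have h2 := h.ca i hi
      rcases hS' _ (e ⟨a i, ha i hi⟩).2 with hv | ⟨j, hj, hv⟩ | ⟨j, hj, hv⟩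
      · exact absurd hv (hne _ (h.ne_a i hi))
      · exact ⟨j, fun _ => ⟨hj, hv⟩⟩
      · have h3 := h.cb j hj
        rw [hv] at h1
        simp only at h1
        tauto
    · exact ⟨0, fun h => absurd h hi⟩
  choose p hp using h1
  have hpid : ∀ i < N, p i = i := by
    refine eq_id_of_strictMono (fun i hi => (hp i hi).1) fun i j hij hj => ?_
    have hi : i < N := by omega
    have h1 := (he ⟨a i, ha i hi⟩ ⟨a j, ha j hj⟩).1 (h.chain i j hij hj)
    rw [(hp i hi).2, (hp j hj).2] at h1
    rcases lt_trichotomy (p i) (p j) with hlt | heq | hlt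
    · exact hlt
    · rw [heq] at h1
      exact absurd h1 (hT.1 _)
    · exact absurd h1 (hT.asymm (h.chain _ _ hlt (hp i hi).1))
  have hea : ∀ i (hi : i < N), (e ⟨a i, ha i hi⟩).val = a i := fun i hi => by
    rw [(hp i hi).2, hpid i hi]
  rintro ⟨v, hv⟩
  rcases hS v hv with rfl | ⟨i, hi, rfl⟩ | ⟨i, hi, rfl⟩
  · rw [hec]
  · exact hea i hi
  · have h1 := hadj ⟨b i, hv⟩
    have h2 := h.cb i hi
    rcases hS' _ (e ⟨b i, hv⟩).2 with hw | ⟨j, hj, hw⟩ | ⟨j, hj, hw⟩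
    · exact absurd hw (hne _ (h.ne_b i hi))
    · have h3 := h.ca j hj
      rw [hw] at h1
      simp only at h1
      tauto
    · rw [hw]
      have : j = i := by
        refine h.b_rigid hj hi fun k hk => ?_
        have := he ⟨a k, ha k hk⟩ ⟨b i, hv⟩
        rw [hea k hk, hw] at this
        exact this.symm
      rw [this]

end MarkedPair

/-- An encoding of Boolean words `f` of length `m` by `m`-element subsets of `{0, …, 2 * m - 1}`,
taking `2 * i` or `2 * i + 1` according to `f i`. -/
lemma exists_choiceCode (m : ℕ) : ∃ ix : (Fin m → Bool) → Fin m → ℕ,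
    (∀ f i, ix f i < 2 * m) ∧ ∀ f g i j, ix f i = ix g j → i = j ∧ f i = g j := by
  let ix : (Fin m → Bool) → Fin m → ℕ := fun f i => 2 * i.val + (if f i then 1 else 0)
  refine ⟨ix, fun f i => ?_, fun f g i j hij => ?_⟩
  · have := i.2
    simp only [ix]
    split_ifs <;> omega
  · simp only [ix] at hij
    have : i = j := by
      apply Fin.ext
      split_ifs at hij <;> omega
    subst this
    refine ⟨rfl, ?_⟩
    cases hf : f i <;> cases hg : g i <;> simp [hf, hg] at hij ⊢

/-- Arbitrarily long marked pairs force exponential growth: keep `c` and the whole chain, and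
for each `i` choose one of `b (2 * i)` and `b (2 * i + 1)`. -/
lemma expGrowth_of_markedPair {V : Type u} {r : V → V → Prop} (hT : IsTournament r)
    (h : ∀ N, ∃ c a b s P Q R, MarkedPair r N c a b s P Q R) : ExpGrowth r := by
  classical
  refine expGrowth_of_two_pow_le fun n m hn hm => ?_
  obtain ⟨N, hN⟩ : ∃ N, n = N + m + 1 := ⟨n - 1 - m, by omega⟩
  obtain ⟨c, a, b, s, P, Q, R, hM⟩ := h N
  obtain ⟨ix, hix', hix_inj⟩ := exists_choiceCode m
  have hix : ∀ f i, ix f i < N := fun f i => lt_of_lt_of_le (hix' f i) (by omega)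
  let S : (Fin m → Bool) → Finset V := fun f =>
    insert c ((Finset.range N).image a ∪ Finset.univ.image fun i => b (ix f i))
  have hmem : ∀ f v, v ∈ S f ↔ v = c ∨ (∃ i < N, v = a i) ∨ ∃ i, v = b (ix f i) := by
    intro f v
    simp [S, eq_comm]
  have hcov : ∀ f, ∀ v ∈ S f, v = c ∨ (∃ i < N, v = a i) ∨ ∃ i < N, v = b i := by
    intro f v hv
    rcases (hmem f v).1 hv with h | h | ⟨i, h⟩
    · exact Or.inl h
    · exact Or.inr (Or.inl h)
    · exact Or.inr (Or.inr ⟨_, hix f i, h⟩)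
  have hcS : ∀ f, c ∈ S f := fun f => (hmem f c).2 (Or.inl rfl)
  have hcard : ∀ f, (S f).card = n := by
    intro f
    have h1 : ((Finset.range N).image a).card = N := by
      rw [Finset.card_image_of_injOn, Finset.card_range]
      intro i hi j hj hij
      exact hM.a_inj hT (by simpa using hi) (by simpa using hj) hij
    have h2 : (Finset.univ.image fun i => b (ix f i)).card = m := by
      rw [Finset.card_image_of_injective, Finset.card_univ, Fintype.card_fin]
      intro i j hij
      exact (hix_inj f f i j (hM.b_inj (hix f i) (hix f j) hij)).1
    rw [Finset.card_insert_of_notMem, Finset.card_union_of_disjoint, h1, h2, hN]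
    · rw [Finset.disjoint_left]
      intro v hv hv'
      obtain ⟨i, hi, rfl⟩ := Finset.mem_image.1 hv
      obtain ⟨j, -, hj⟩ := Finset.mem_image.1 hv'
      exact hM.a_ne_b (by simpa using hi) (hix f j) hj.symm
    · intro hmem
      rcases Finset.mem_union.1 hmem with hv | hv
      · obtain ⟨i, hi, hv⟩ := Finset.mem_image.1 hv
        exact hM.ne_a i (by simpa using hi) hv
      · obtain ⟨i, -, hv⟩ := Finset.mem_image.1 hv
        exact hM.ne_b _ (hix f i) hv
  have := card_le_mul_profile r S hcard c hcS ?_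
  · simpa using this
  · intro f g e he hec
    have hid := hM.iso_eq hT (hcS f) (hcS g)
      (fun i hi => (hmem f _).2 (Or.inr (Or.inl ⟨i, hi, rfl⟩))) (hcov f) (hcov g) e he hec
    funext i
    have hb : b (ix f i) ∈ S f := (hmem f _).2 (Or.inr (Or.inr ⟨i, rfl⟩))
    have hb' : b (ix f i) ∈ S g := by
      have := (e ⟨_, hb⟩).2
      rwa [hid ⟨_, hb⟩] at this
    rcases (hmem g _).1 hb' with h | ⟨j, hj, h⟩ | ⟨j, h⟩
    · exact absurd h (hM.ne_b _ (hix f i))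
    · exact absurd h.symm (hM.a_ne_b hj (hix f i))
    · obtain ⟨rfl, h⟩ := hix_inj f g i j (hM.b_inj (hix f i) (hix g j) h)
      exact h

/-! ### Sums of 3-cycles -/

/-- `u` and `w` are interleaved in a transitive way: every vertex of index `i` dominates every
vertex of index `j` whenever `i < j`. Nothing is said about `u i` and `w i`, which may even be
equal. -/
def ChainPair {V : Type u} (r : V → V → Prop) (u w : ℕ → V) : Prop :=
  ∀ i j, i < j → r (u i) (u j) ∧ r (u i) (w j) ∧ r (w i) (u j) ∧ r (w i) (w j)

lemma ChainPair.symm {V : Type u} {r : V → V → Prop} {u w : ℕ → V} (h : ChainPair r u w) :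
    ChainPair r w u := fun i j hij =>
  ⟨(h i j hij).2.2.2, (h i j hij).2.2.1, (h i j hij).2.1, (h i j hij).1⟩

/-- A lexicographical sum of 3-cycles along `ω`: the cycles `a i → b i → c i → a i`, each
dominating all the later ones; `idx` returns the index of the cycle of a vertex. -/
structure CycleSum {V : Type u} (r : V → V → Prop) (a b c : ℕ → V) (idx : V → ℕ) : Prop where
  ab : ∀ i, r (a i) (b i)
  bc : ∀ i, r (b i) (c i)
  ca : ∀ i, r (c i) (a i)
  idx_a : ∀ i, idx (a i) = i
  idx_b : ∀ i, idx (b i) = i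
  idx_c : ∀ i, idx (c i) = i
  chain_ab : ChainPair r a b
  chain_bc : ChainPair r b c
  chain_ac : ChainPair r a c

/-- `S` consists of `a i` for all `i < M`, and of `b i` and `c i` for the selected indices. -/
def IsSelection {V : Type u} (a b c : ℕ → V) (M : ℕ) (sel : ℕ → Prop) (S : Finset V) : Prop :=
  ∀ v, v ∈ S ↔ (∃ i < M, v = a i) ∨ ∃ i < M, sel i ∧ (v = b i ∨ v = c i)

section CycleSum

variable {V : Type u} {r : V → V → Prop} {a b c : ℕ → V} {idx : V → ℕ}

lemma CycleSum.rel_of_lt (h : CycleSum r a b c idx) {M : ℕ} {sel : ℕ → Prop} {S : Finset V}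
    (hS : IsSelection a b c M sel S) {v w : V} (hv : v ∈ S) (hw : w ∈ S) (hlt : idx v < idx w) :
    r v w := by
  rcases (hS v).1 hv with ⟨i, -, rfl⟩ | ⟨i, -, -, rfl | rfl⟩ <;>
  rcases (hS w).1 hw with ⟨j, -, rfl⟩ | ⟨j, -, -, rfl | rfl⟩ <;>
  simp only [h.idx_a, h.idx_b, h.idx_c] at hlt <;>
  have h1 := h.chain_ab i j hlt <;>
  have h2 := h.chain_bc i j hlt <;>
  have h3 := h.chain_ac i j hlt <;>
  tauto

lemma CycleSum.idx_le (hT : IsTournament r) (h : CycleSum r a b c idx) {M : ℕ} {sel : ℕ → Prop}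
    {S : Finset V} (hS : IsSelection a b c M sel S) {v w : V} (hv : v ∈ S) (hw : w ∈ S)
    (hr : r v w) : idx v ≤ idx w := by
  by_contra hlt
  exact hT.asymm hr (h.rel_of_lt hS hw hv (not_le.1 hlt))

/-- Two distinct vertices of the same index lie in a complete 3-cycle of the selection. -/
lemma CycleSum.selected (h : CycleSum r a b c idx) {M : ℕ} {sel : ℕ → Prop}
    {S : Finset V} (hS : IsSelection a b c M sel S) {v w : V} (hv : v ∈ S) (hw : w ∈ S)
    (hne : v ≠ w) (hidx : idx v = idx w) : ∃ i < M, sel i ∧ i = idx v ∧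
      (v = a i ∨ v = b i ∨ v = c i) ∧ (w = a i ∨ w = b i ∨ w = c i) := by
  rcases (hS v).1 hv with ⟨i, hi, rfl⟩ | ⟨i, hi, hs, rfl | rfl⟩ <;>
  rcases (hS w).1 hw with ⟨j, hj, rfl⟩ | ⟨j, hj, hs', rfl | rfl⟩ <;>
  simp only [h.idx_a, h.idx_b, h.idx_c] at hidx <;>
  subst hidx
  · exact absurd rfl hne
  all_goals
    refine ⟨i, hi, by assumption, ?_, ?_, ?_⟩ <;> simp [h.idx_a, h.idx_b, h.idx_c]

/-- An isomorphism maps 3-cycles to 3-cycles, hence respects the partition into blocks. -/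
lemma CycleSum.idx_eq (hT : IsTournament r) (h : CycleSum r a b c idx) {M : ℕ}
    {sel sel' : ℕ → Prop} {S S' : Finset V} (hS : IsSelection a b c M sel S)
    (hS' : IsSelection a b c M sel' S') (e : {x // x ∈ S} ≃ {x // x ∈ S'})
    (he : ∀ x y, r x.val y.val ↔ r (e x).val (e y).val) (x y : {x // x ∈ S})
    (hxy : idx x.val = idx y.val) : idx (e x).val = idx (e y).val := by
  rcases eq_or_ne x y with rfl | hne
  · rfl
  obtain ⟨i, hi, hs, -, hx, hy⟩ := h.selected hS x.2 y.2 (fun h => hne (Subtype.ext h)) hxy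
  have ha : a i ∈ S := (hS _).2 (Or.inl ⟨i, hi, rfl⟩)
  have hb : b i ∈ S := (hS _).2 (Or.inr ⟨i, hi, hs, Or.inl rfl⟩)
  have hc : c i ∈ S := (hS _).2 (Or.inr ⟨i, hi, hs, Or.inr rfl⟩)
  have h1 := h.idx_le hT hS' (e ⟨_, ha⟩).2 (e ⟨_, hb⟩).2 ((he ⟨_, ha⟩ ⟨_, hb⟩).1 (h.ab i))
  have h2 := h.idx_le hT hS' (e ⟨_, hb⟩).2 (e ⟨_, hc⟩).2 ((he ⟨_, hb⟩ ⟨_, hc⟩).1 (h.bc i))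
  have h3 := h.idx_le hT hS' (e ⟨_, hc⟩).2 (e ⟨_, ha⟩).2 ((he ⟨_, hc⟩ ⟨_, ha⟩).1 (h.ca i))
  obtain ⟨x, hxS⟩ := x
  obtain ⟨y, hyS⟩ := y
  simp only at hx hy
  rcases hx with rfl | rfl | rfl <;> rcases hy with rfl | rfl | rfl <;> omega

/-- An isomorphism between two selections preserves the index of every vertex, because it
permutes the blocks increasingly. -/
lemma CycleSum.idx_iso (hT : IsTournament r) (h : CycleSum r a b c idx) {M : ℕ}
    {sel sel' : ℕ → Prop} {S S' : Finset V} (hS : IsSelection a b c M sel S)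
    (hS' : IsSelection a b c M sel' S') (e : {x // x ∈ S} ≃ {x // x ∈ S'})
    (he : ∀ x y, r x.val y.val ↔ r (e x).val (e y).val) (x : {x // x ∈ S}) :
    idx (e x).val = idx x.val := by
  have hlt : ∀ {sel : ℕ → Prop} {S : Finset V}, IsSelection a b c M sel S → ∀ v ∈ S,
      idx v < M := by
    intro sel S hS v hv
    rcases (hS v).1 hv with ⟨i, hi, rfl⟩ | ⟨i, hi, -, rfl | rfl⟩ <;>
    simpa only [h.idx_a, h.idx_b, h.idx_c] using hi
  have ha : ∀ i < M, a i ∈ S := fun i hi => (hS _).2 (Or.inl ⟨i, hi, rfl⟩)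
  have hp : ∃ p : ℕ → ℕ, ∀ i (hi : i < M), p i = idx (e ⟨a i, ha i hi⟩).val := by
    classical
    exact ⟨fun i => if hi : i < M then idx (e ⟨a i, ha i hi⟩).val else 0,
      fun i hi => by simp [hi]⟩
  obtain ⟨p, hp⟩ := hp
  have hid : ∀ i < M, p i = i := by
    refine eq_id_of_strictMono (fun i hi => ?_) fun i j hij hj => ?_
    · rw [hp i hi]
      exact hlt hS' _ (e _).2
    · have hi : i < M := by omega
      rw [hp i hi, hp j hj]
      refine lt_of_le_of_ne (h.idx_le hT hS' (e _).2 (e _).2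
        ((he _ _).1 (h.chain_ab i j hij).1)) fun heq => ?_
      have := h.idx_eq hT hS' hS e.symm
        (fun x y => by simpa using (he (e.symm x) (e.symm y)).symm) _ _ heq
      simp only [Equiv.symm_apply_apply, h.idx_a] at this
      omega
  have hx := hlt hS _ x.2
  have h1 := h.idx_eq hT hS hS' e he x ⟨a (idx x.val), ha _ hx⟩ (h.idx_a _).symm
  rw [h1, ← hp _ hx, hid _ hx]

/-- Sums of 3-cycles along `ω` have exponential profile: keep one vertex of each of the first
`M` cycles and complete some of them. -/
lemma CycleSum.expGrowth (hT : IsTournament r) (h : CycleSum r a b c idx) : ExpGrowth r := by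
  classical
  refine expGrowth_of_two_pow_le fun n m hn hm => ?_
  obtain ⟨M, hM⟩ : ∃ M, n = M + m + m := ⟨n - 2 * m, by omega⟩
  obtain ⟨ix, hix', hix_inj⟩ := exists_choiceCode m
  have hix : ∀ f i, ix f i < M := fun f i => lt_of_lt_of_le (hix' f i) (by omega)
  let S : (Fin m → Bool) → Finset V := fun f =>
    ((Finset.range M).image a ∪ Finset.univ.image fun i => b (ix f i)) ∪
      Finset.univ.image fun i => c (ix f i)
  have hS : ∀ f, IsSelection a b c M (fun k => ∃ i, ix f i = k) (S f) := by
    intro f v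
    simp only [S, Finset.mem_union, Finset.mem_image, Finset.mem_range, Finset.mem_univ,
      true_and]
    constructor
    · rintro ((⟨i, hi, rfl⟩ | ⟨i, rfl⟩) | ⟨i, rfl⟩)
      · exact Or.inl ⟨i, hi, rfl⟩
      · exact Or.inr ⟨_, hix f i, ⟨i, rfl⟩, Or.inl rfl⟩
      · exact Or.inr ⟨_, hix f i, ⟨i, rfl⟩, Or.inr rfl⟩
    · rintro (⟨i, hi, rfl⟩ | ⟨i, hi, ⟨j, rfl⟩, rfl | rfl⟩)
      · exact Or.inl (Or.inl ⟨i, hi, rfl⟩)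
      · exact Or.inl (Or.inr ⟨j, rfl⟩)
      · exact Or.inr ⟨j, rfl⟩
  have hab : ∀ i j, a i ≠ b j := by
    intro i j hij
    have : i = j := by rw [← h.idx_a i, hij, h.idx_b]
    subst this
    exact hT.ne (h.ab i) hij
  have hac : ∀ i j, a i ≠ c j := by
    intro i j hij
    have : i = j := by rw [← h.idx_a i, hij, h.idx_c]
    subst this
    exact hT.ne (h.ca i) hij.symm
  have hbc : ∀ i j, b i ≠ c j := by
    intro i j hij
    have : i = j := by rw [← h.idx_b i, hij, h.idx_c]
    subst this
    exact hT.ne (h.bc i) hij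
  have hcard : ∀ f, (S f).card = n := by
    intro f
    have h1 : ((Finset.range M).image a).card = M := by
      rw [Finset.card_image_of_injective, Finset.card_range]
      exact Function.LeftInverse.injective h.idx_a
    have h2 : (Finset.univ.image fun i => b (ix f i)).card = m := by
      rw [Finset.card_image_of_injective, Finset.card_univ, Fintype.card_fin]
      intro i j hij
      exact (hix_inj f f i j (Function.LeftInverse.injective h.idx_b hij)).1
    have h3 : (Finset.univ.image fun i => c (ix f i)).card = m := by
      rw [Finset.card_image_of_injective, Finset.card_univ, Fintype.card_fin]
      intro i j hij
      exact (hix_inj f f i j (Function.LeftInverse.injective h.idx_c hij)).1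
    rw [Finset.card_union_of_disjoint, Finset.card_union_of_disjoint, h1, h2, h3, hM]
    · rw [Finset.disjoint_left]
      intro v hv hv'
      obtain ⟨i, -, rfl⟩ := Finset.mem_image.1 hv
      obtain ⟨j, -, hj⟩ := Finset.mem_image.1 hv'
      exact hab _ _ hj.symm
    · rw [Finset.disjoint_left]
      intro v hv hv'
      obtain ⟨j, -, rfl⟩ := Finset.mem_image.1 hv'
      rcases Finset.mem_union.1 hv with hv | hv
      · obtain ⟨i, -, hj⟩ := Finset.mem_image.1 hv
        exact hac _ _ hj
      · obtain ⟨i, -, hj⟩ := Finset.mem_image.1 hv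
        exact hbc _ _ hj
  have := card_le_mul_profile r S hcard (a 0)
    (fun f => (hS f _).2 (Or.inl ⟨0, by omega, rfl⟩)) ?_
  · simpa using this
  · intro f g e he _
    have hid := h.idx_iso hT (hS f) (hS g) e he
    funext i
    have ha : a (ix f i) ∈ S f := (hS f _).2 (Or.inl ⟨_, hix f i, rfl⟩)
    have hb : b (ix f i) ∈ S f := (hS f _).2 (Or.inr ⟨_, hix f i, ⟨i, rfl⟩, Or.inl rfl⟩)
    have hne : (e ⟨_, ha⟩).val ≠ (e ⟨_, hb⟩).val := by
      intro heq
      have := e.injective (Subtype.ext heq)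
      exact hab _ _ (congrArg Subtype.val this)
    obtain ⟨k, -, ⟨j, hj⟩, hk, -⟩ := h.selected (hS g) (e ⟨_, ha⟩).2 (e ⟨_, hb⟩).2 hne
      (by rw [hid, hid, h.idx_a, h.idx_b])
    rw [hid, h.idx_a] at hk
    obtain ⟨rfl, h⟩ := hix_inj f g i j (hk.symm.trans hj.symm)
    exact h

end CycleSum

/-- Distinct cycles are disjoint because vertices of smaller index dominate those of larger index;
this makes the index of a vertex well defined. -/
lemma expGrowth_of_cycles {V : Type u} {r : V → V → Prop} (hT : IsTournament r)
    {a b c : ℕ → V} (hab : ChainPair r a b) (hbc : ChainPair r b c) (hac : ChainPair r a c)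
    (h : ∀ i, r (a i) (b i) ∧ r (b i) (c i) ∧ r (c i) (a i)) : ExpGrowth r := by
  classical
  have key : ∀ v i j, (v = a i ∨ v = b i ∨ v = c i) → (v = a j ∨ v = b j ∨ v = c j) →
      ¬ i < j := by
    intro v i j hi hj hlt
    apply hT.1 v
    have h1 := hab i j hlt
    have h2 := hbc i j hlt
    have h3 := hac i j hlt
    rcases hi with hi | hi | hi <;> rcases hj with hj | hj | hj <;>
      (nth_rewrite 1 [hi]; rw [hj]; tauto)
  let idx : V → ℕ := fun v =>
    if h : ∃ i, v = a i ∨ v = b i ∨ v = c i then h.choose else 0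
  have hidx : ∀ v i, (v = a i ∨ v = b i ∨ v = c i) → idx v = i := by
    intro v i hv
    have hex : ∃ i, v = a i ∨ v = b i ∨ v = c i := ⟨i, hv⟩
    have h1 := key v i _ hv hex.choose_spec
    have h2 := key v _ i hex.choose_spec hv
    simp only [idx, dif_pos hex]
    omega
  exact CycleSum.expGrowth (idx := idx) hT
    ⟨fun i => (h i).1, fun i => (h i).2.1, fun i => (h i).2.2, fun i => hidx _ i (by simp),
      fun i => hidx _ i (by simp), fun i => hidx _ i (by simp), hab, hbc, hac⟩

/-! ### Homogeneous sequences -/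

/-- The pair of sequences `u`, `w` is homogeneous: for `i < j` the relation between `u i` and
`w j` does not depend on `i` and `j`, and neither does the relation between `u i` and `w i`.
Mentioning `r` in both directions also records whether the vertices are equal. -/
def Homog {V : Type u} (r : V → V → Prop) (u w : ℕ → V) : Prop :=
  (∀ i j k l, i < j → k < l →
    (r (u i) (w j) ↔ r (u k) (w l)) ∧ (r (w j) (u i) ↔ r (w l) (u k))) ∧
  ∀ i k, (r (u i) (w i) ↔ r (u k) (w k)) ∧ (r (w i) (u i) ↔ r (w k) (u k))

section Homog

variable {V : Type u} {r : V → V → Prop} {u w z : ℕ → V}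

/-- One equality `u i = w j` with `i < j` in a homogeneous pair forces all of them, as equality
means that neither edge is present. -/
lemma Homog.eq_of_eq (hT : IsTournament r) (h : Homog r u w) {i j : ℕ} (hij : i < j)
    (heq : u i = w j) {k l : ℕ} (hkl : k < l) : u k = w l := by
  by_contra hne
  have h1 := h.1 i j k l hij hkl
  rw [heq] at h1
  have h2 := hT.1 (w j)
  by_cases h3 : r (u k) (w l)
  · exact h2 (h1.1.2 h3)
  · exact h2 (h1.2.2 (hT.of_not hne h3))

/-- Interleaved chains `u` and `w` and, for every `m`, a vertex `z` with `u i → z → w i` for `m`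
consecutive values of `i` yield arbitrarily long marked pairs, with `z` as the marking vertex. -/
lemma ChainPair.expGrowth_of_alternating (hT : IsTournament r) (h : ChainPair r u w)
    (hd : Homog r u w) (hz : ∀ m, ∃ k z, ∀ i < m, r (u (k + i)) z ∧ r z (w (k + i))) :
    ExpGrowth r := by
  refine expGrowth_of_markedPair hT fun N => ?_
  obtain ⟨k, z, hz⟩ := hz N
  refine ⟨z, fun i => u (k + i), fun i => w (k + i), False, True, r (u 0) (w 0), False,
    fun i hi => hT.ne (hz i hi).1, fun i hi => (hT.ne (hz i hi).2).symm,
    fun i hi => ?_, fun i hi => ?_, fun i j hij _ => (h _ _ (by omega)).1,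
    fun i j hij _ => ?_, fun i _ => (hd.2 _ _).1, fun i j hij _ => ?_, by tauto⟩
  · exact iff_false_intro (hT.asymm (hz i hi).1)
  · simpa using (hz i hi).2
  · simpa using (h (k + i) (k + j) (by omega)).2.1
  · simpa using hT.asymm (h (k + i) (k + j) (by omega)).2.2.1

/-- If `u` is an increasing chain and `(u, z)` is a homogeneous pair of injective sequences with
disjoint ranges, then the profile is exponential unless `u` and `z` are interleaved or one of
them completely dominates the other. In the remaining cases the adjacency of `u` and `z` is
nontrivial, and one of `u 0`, `z 0` (a first vertex) or `u N` (a last vertex) tells the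
sequences apart. -/
lemma Homog.dichotomy (hT : IsTournament r) (hu : ∀ i j, i < j → r (u i) (u j))
    (huz : Homog r u z) (hzu : Homog r z u) (hzz : Homog r z z) (hz : ∀ i j, i < j → z i ≠ z j)
    (hne : ∀ i j, u i ≠ z j) :
    ExpGrowth r ∨ ChainPair r u z ∨ (∀ i j, r (u i) (z j)) ∨ (∀ i j, r (z j) (u i)) := by
  have hP : ∀ i j, i < j → (r (u i) (z j) ↔ r (u 0) (z 1)) := fun i j hij =>
    (huz.1 i j 0 1 hij one_pos).1
  have hR : ∀ i j, i < j → (r (u j) (z i) ↔ r (u 1) (z 0)) := fun i j hij =>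
    (hzu.1 i j 0 1 hij one_pos).2
  have hR' : ∀ i j, i < j → (r (z i) (u j) ↔ ¬ r (u 1) (z 0)) := fun i j hij => by
    rw [hT.2 _ _ (hne j i).symm, hR i j hij]
  have hQ : ∀ i, r (u i) (z i) ↔ r (u 0) (z 0) := fun i => (huz.2 i 0).1
  have hγ : ∀ i j, i < j → (r (z i) (z j) ↔ r (z 0) (z 1)) := fun i j hij =>
    (hzz.1 i j 0 1 hij one_pos).1
  by_cases htriv : (r (u 0) (z 1) ↔ r (u 0) (z 0)) ∧ (r (u 0) (z 0) ↔ r (u 1) (z 0))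
  · right; right
    have hall : ∀ i j, r (u i) (z j) ↔ r (u 0) (z 0) := by
      intro i j
      rcases lt_trichotomy i j with hlt | rfl | hlt
      · rw [hP i j hlt, htriv.1]
      · exact hQ i
      · rw [hR j i hlt, htriv.2]
    by_cases h0 : r (u 0) (z 0)
    · exact Or.inl fun i j => (hall i j).2 h0
    · exact Or.inr fun i j => hT.of_not (hne i j) (fun h => h0 ((hall i j).1 h))
  by_cases h1 : r (u 0) (z 1)
  · by_cases h2 : r (z 0) (z 1) ↔ r (u 1) (z 0)
    · left
      refine expGrowth_of_markedPair hT fun N => ?_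
      refine ⟨z 0, fun i => u (i + 1), fun i => z (i + 1), ¬ r (u 1) (z 0), _, _, _,
        fun i _ => hne _ _, fun i _ => (hz 0 _ (by omega)).symm, fun i _ => hR' _ _ (by omega),
        fun i _ => ?_, fun i j hij _ => hu _ _ (by omega), fun i j hij _ => hP _ _ (by omega),
        fun i _ => hQ _, fun i j hij _ => hR _ _ (by omega), htriv⟩
      rw [hγ _ _ (by omega), h2, not_not]
    · by_cases h3 : r (u 1) (z 0)
      · left
        refine expGrowth_of_markedPair hT fun N => ?_
        refine ⟨u N, u, z, False, _, _, _,
          fun i hi => hT.ne (hu _ _ hi), fun i _ => (hne _ _).symm,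
          fun i hi => iff_false_intro (hT.asymm (hu _ _ hi)), fun i hi => ?_,
          fun i j hij _ => hu _ _ hij, fun i j hij _ => hP _ _ hij,
          fun i _ => hQ _, fun i j hij _ => hR _ _ hij, htriv⟩
        rw [hR _ _ hi]
        tauto
      · right; left
        intro i j hij
        refine ⟨hu _ _ hij, (hP _ _ hij).2 h1, (hR' _ _ hij).2 h3, (hγ _ _ hij).2 ?_⟩
        tauto
  · left
    refine expGrowth_of_markedPair hT fun N => ?_
    refine ⟨u 0, fun i => u (i + 1), fun i => z (i + 1), True, _, _, _,
      fun i _ => (hT.ne (hu _ _ (by omega))).symm, fun i _ => (hne _ _).symm,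
      fun i _ => iff_true_intro (hu _ _ (by omega)), fun i _ => ?_,
      fun i j hij _ => hu _ _ (by omega), fun i j hij _ => hP _ _ (by omega),
      fun i _ => hQ _, fun i j hij _ => hR _ _ (by omega), htriv⟩
    rw [hP _ _ (by omega)]
    tauto

/-- An off-diagonal equality would make two terms of the injective sequence `u` coincide. -/
lemma Homog.off_diag_ne (hT : IsTournament r) (hu : ∀ i j, i < j → u i ≠ u j)
    (huz : Homog r u z) (hzu : Homog r z u) {i j : ℕ} (hij : i ≠ j) : u i ≠ z j := by
  intro heq
  rcases lt_or_gt_of_ne hij with hlt | hlt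
  · have h1 := huz.eq_of_eq hT hlt heq (show 0 < 2 by omega)
    have h2 := huz.eq_of_eq hT hlt heq (show 1 < 2 by omega)
    exact hu 0 1 one_pos (h1.trans h2.symm)
  · have h1 := hzu.eq_of_eq hT hlt heq.symm (show 0 < 1 by omega)
    have h2 := hzu.eq_of_eq hT hlt heq.symm (show 0 < 2 by omega)
    exact hu 1 2 (by omega) (h1.symm.trans h2)

/-- A sequence `z` with `u i → z i → w i`, where `u` and `w` are interleaved chains, is itself
interleaved with them, or the profile is exponential: in every other case some `z i` alternates
with respect to `u` and `w` many times. -/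
lemma ChainPair.squeeze (hT : IsTournament r) (h : ChainPair r u w) (huw : Homog r u w)
    (huz : Homog r u z) (hzu : Homog r z u) (hwz : Homog r w z) (hzw : Homog r z w)
    (hzz : Homog r z z) (h1 : ∀ i, r (u i) (z i)) (h2 : ∀ i, r (z i) (w i)) :
    ExpGrowth r ∨ (ChainPair r u z ∧ ChainPair r w z) := by
  by_cases hconst : ∃ i j, i < j ∧ z i = z j
  · obtain ⟨i, j, hij, heq⟩ := hconst
    have hz : ∀ k, z 0 = z k := by
      intro k
      rcases Nat.eq_zero_or_pos k with rfl | hk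
      · rfl
      · exact hzz.eq_of_eq hT hij heq hk
    refine Or.inl (h.expGrowth_of_alternating hT huw fun m => ⟨0, z 0, fun i _ => ?_⟩)
    rw [zero_add]
    nth_rewrite 1 [hz i]
    rw [hz i]
    exact ⟨h1 i, h2 i⟩
  · have hz : ∀ i j, i < j → z i ≠ z j := fun i j hij heq => hconst ⟨i, j, hij, heq⟩
    have hu : ∀ i j, i < j → r (u i) (u j) := fun i j hij => (h i j hij).1
    have hw : ∀ i j, i < j → r (w i) (w j) := fun i j hij => (h i j hij).2.2.2
    have hne_u : ∀ i j, u i ≠ z j := by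
      intro i j
      rcases eq_or_ne i j with rfl | hij
      · exact hT.ne (h1 i)
      · exact huz.off_diag_ne hT (fun i j hij => hT.ne (hu i j hij)) hzu hij
    have hne_w : ∀ i j, w i ≠ z j := by
      intro i j
      rcases eq_or_ne i j with rfl | hij
      · exact (hT.ne (h2 i)).symm
      · exact hwz.off_diag_ne hT (fun i j hij => hT.ne (hw i j hij)) hzw hij
    rcases huz.dichotomy hT hu hzu hzz hz hne_u with hG | hcu | hfu | hfu
    · exact Or.inl hG
    · rcases hwz.dichotomy hT hw hzw hzz hz hne_w with hG | hcw | hfw | hfw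
      · exact Or.inl hG
      · exact Or.inr ⟨hcu, hcw⟩
      · exact absurd (h2 0) (hT.asymm (hfw 0 0))
      · refine Or.inl (h.expGrowth_of_alternating hT huw fun m => ⟨0, z m, fun i hi => ?_⟩)
        rw [zero_add]
        exact ⟨(hcu i m hi).2.1, hfw i m⟩
    · rcases hwz.dichotomy hT hw hzw hzz hz hne_w with hG | hcw | hfw | hfw
      · exact Or.inl hG
      · exact Or.inl (h.expGrowth_of_alternating hT huw fun m =>
          ⟨1, z 0, fun i _ => ⟨hfu _ _, (hcw 0 (1 + i) (by omega)).2.2.1⟩⟩)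
      · exact absurd (h2 0) (hT.asymm (hfw 0 0))
      · exact Or.inl (h.expGrowth_of_alternating hT huw fun m =>
          ⟨1, z 0, fun i _ => ⟨hfu _ _, hfw _ _⟩⟩)
    · exact absurd (h1 0) (hT.asymm (hfu 0 0))

end Homog

/-! ### Ramsey's theorem -/

/-- Ramsey's theorem for pairs with finitely many colours: choose the colour that is most
frequent with respect to a nonprincipal ultrafilter. -/
lemma exists_homogeneous_subseq {K : Type} [Finite K] (col : ℕ → ℕ → K) :
    ∃ φ : ℕ → ℕ, (∀ i j, i < j → φ i < φ j) ∧ ∃ k, ∀ i j, i < j → col (φ i) (φ j) = k := by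
  have hU : ∀ g : ℕ → K, ∃ k, ∀ᶠ j in (Filter.hyperfilter ℕ : Filter ℕ), g j = k := by
    intro g
    obtain ⟨k, hk⟩ := ((Filter.hyperfilter ℕ).map g).eq_pure_of_finite
    refine ⟨k, ?_⟩
    have : {k} ∈ (Filter.hyperfilter ℕ).map g := by rw [hk]; exact rfl
    exact this
  choose κ hκ using fun i => hU (col i)
  obtain ⟨k, hk⟩ := hU κ
  obtain ⟨φ, hφ, hφ'⟩ := exists_seq_of_forall_finset_exists (fun i => κ i = k)
    (fun i j => i < j ∧ col i j = k) fun s hs => by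
      have h1 : ∀ᶠ j in (Filter.hyperfilter ℕ : Filter ℕ), ∀ x ∈ s, x < j ∧ col x j = k := by
        rw [Filter.eventually_all_finset]
        intro x hx
        have hlt : ∀ᶠ j in (Filter.hyperfilter ℕ : Filter ℕ), x < j :=
          Nat.hyperfilter_le_atTop (Filter.eventually_gt_atTop x)
        filter_upwards [hlt, hκ x] with j hj hj'
        exact ⟨hj, hj'.trans (hs x hx)⟩
      exact (hk.and h1).exists
  exact ⟨φ, fun i j hij => (hφ' i j hij).1, k, fun i j hij => (hφ' i j hij).2⟩

lemma exists_homog_subseq {V : Type u} (r : V → V → Prop) {n : ℕ} (X : Fin n → ℕ → V) :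
    ∃ φ : ℕ → ℕ, (∀ i j, i < j → φ i < φ j) ∧
      ∀ s t, Homog r (fun i => X s (φ i)) (fun i => X t (φ i)) := by
  obtain ⟨φ, hφ, k, hk⟩ := exists_homogeneous_subseq
    (K := Fin n → Fin n → Prop × Prop × Prop × Prop)
    (fun i j s t => (r (X s i) (X t j), r (X t j) (X s i), r (X s i) (X t i), r (X t i) (X s i)))
  refine ⟨φ, hφ, fun s t => ⟨fun i j i' j' hij hij' => ?_, fun i i' => ?_⟩⟩
  · have h := congrFun (congrFun ((hk i j hij).trans (hk i' j' hij').symm) s) t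
    simp only [Prod.mk.injEq, eq_iff_iff] at h
    exact ⟨h.1, h.2.1⟩
  · have h := congrFun (congrFun
      ((hk i (i + 1) (by omega)).trans (hk i' (i' + 1) (by omega)).symm) s) t
    simp only [Prod.mk.injEq, eq_iff_iff] at h
    exact ⟨h.2.2.1, h.2.2.2⟩

/-! ### Squeezed 3-cycles in indecomposable tournaments -/

/-- In an infinite indecomposable tournament, every edge `p → q` spans an interval
`{p, q} ∪ {y | p → y → q}` that has two vertices in common with some 3-cycle. -/
lemma exists_cycle {V : Type u} {r : V → V → Prop} (hT : IsTournament r) (hInf : Infinite V)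
    (hInd : Indecomposable r) {p q : V} (hpq : r p q) :
    ∃ a b c, r a b ∧ r b c ∧ r c a ∧ (a = p ∨ r p a) ∧ (a = q ∨ r a q) ∧
      (b = p ∨ r p b) ∧ (b = q ∨ r b q) := by
  let S : Set V := {y | (y = p ∨ r p y) ∧ (y = q ∨ r y q)}
  have hpS : p ∈ S := ⟨Or.inl rfl, Or.inr hpq⟩
  have hqS : q ∈ S := ⟨Or.inr hpq, Or.inl rfl⟩
  -- an indecomposable tournament with more than two vertices has no source
  have hnsrc : S ≠ Set.univ := by
    intro hS
    have haut : Autonomous r {p}ᶜ := by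
      intro x hx x' hx' y hy
      have hy : y = p := by simpa using hy
      subst hy
      have key : ∀ x, x ∈ ({y}ᶜ : Set V) → ¬ r x y := by
        intro x hx
        have hxS : x ∈ S := by rw [hS]; trivial
        exact hT.asymm (hxS.1.resolve_left hx)
      exact iff_of_false (key x hx) (key x' hx')
    have hinf : ({p}ᶜ : Set V).Infinite := (Set.finite_singleton p).infinite_compl
    rcases hInd _ haut with h | ⟨x, h⟩ | h
    · rw [h] at hinf
      exact hinf Set.finite_empty
    · rw [h] at hinf
      exact hinf (Set.finite_singleton x)
    · have : p ∈ ({p}ᶜ : Set V) := by rw [h]; trivial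
      exact this rfl
  have hnaut : ¬ Autonomous r S := by
    intro haut
    rcases hInd _ haut with h | ⟨x, h⟩ | h
    · rw [h] at hpS
      exact hpS
    · rw [h] at hpS hqS
      exact hT.ne hpq (hpS.trans hqS.symm)
    · exact hnsrc h
  obtain ⟨a, ha, a', ha', z, hz, haz, hza'⟩ : ∃ a ∈ S, ∃ a' ∈ S, ∃ z ∉ S, r a z ∧ r z a' := by
    by_contra hno
    apply hnaut
    have key : ∀ x ∈ S, ∀ x' ∈ S, ∀ y ∉ S, r x y → r x' y := by
      intro x hx x' hx' y hy hxy
      by_contra hx'y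
      refine hno ⟨x, hx, x', hx', y, hy, hxy, hT.of_not ?_ hx'y⟩
      rintro rfl
      exact hy hx'
    exact fun x hx x' hx' y hy => ⟨key x hx x' hx' y hy, key x' hx' x hx y hy⟩
  by_cases haa' : r a' a
  · exact ⟨a', a, z, haa', haz, hza', ha'.1, ha'.2, ha.1, ha.2⟩
  · have hz' : r z p ∨ r q z := by
      by_contra hno
      rw [not_or] at hno
      refine hz ⟨Or.inr (hT.of_not ?_ hno.1), Or.inr (hT.of_not ?_ hno.2)⟩
      · rintro rfl
        exact hz hpS
      · rintro rfl
        exact hz hqS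
    rcases hz' with hzp | hqz
    · have hap : r p a := by
        refine ha.1.resolve_left ?_
        rintro rfl
        exact hT.asymm haz hzp
      exact ⟨p, a, z, hap, haz, hzp, hpS.1, hpS.2, ha.1, ha.2⟩
    · have haq : r a' q := by
        refine ha'.2.resolve_left ?_
        rintro rfl
        exact hT.asymm hqz hza'
      exact ⟨a', q, z, haq, hqz, hza', ha'.1, ha'.2, hqS.1, hqS.2⟩

/-- The theorem for a tournament that contains an increasing sequence `x 0 → x 1 → ⋯`. -/
lemma expGrowth_of_chain {V : Type u} {r : V → V → Prop} (hT : IsTournament r)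
    (hInf : Infinite V) (hInd : Indecomposable r) (x : ℕ → V)
    (hx : ∀ i j, i < j → r (x i) (x j)) : ExpGrowth r := by
  by_contra hG
  choose a b c hab hbc hca hap haq hbp hbq using fun i =>
    exists_cycle hT hInf hInd (hx (2 * i) (2 * i + 1) (by omega))
  obtain ⟨φ, hφ, hX⟩ := exists_homog_subseq r
    ![fun i => x (2 * i), fun i => x (2 * i + 1), a, b, c]
  obtain ⟨p, hp⟩ : ∃ p : ℕ → V, p = fun i => x (2 * φ i) := ⟨_, rfl⟩
  obtain ⟨q, hq⟩ : ∃ q : ℕ → V, q = fun i => x (2 * φ i + 1) := ⟨_, rfl⟩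
  obtain ⟨a', ha'⟩ : ∃ a' : ℕ → V, a' = fun i => a (φ i) := ⟨_, rfl⟩
  obtain ⟨b', hb'⟩ : ∃ b' : ℕ → V, b' = fun i => b (φ i) := ⟨_, rfl⟩
  obtain ⟨c', hc'⟩ : ∃ c' : ℕ → V, c' = fun i => c (φ i) := ⟨_, rfl⟩
  have hH : ∀ u ∈ [p, q, a', b', c'], ∀ w ∈ [p, q, a', b', c'], Homog r u w := by
    have : ∀ u ∈ [p, q, a', b', c'], ∃ s, u = fun i =>
        (![fun i => x (2 * i), fun i => x (2 * i + 1), a, b, c] : Fin 5 → ℕ → V) s (φ i) := by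
      intro u hu
      simp only [List.mem_cons, List.not_mem_nil, or_false] at hu
      rcases hu with rfl | rfl | rfl | rfl | rfl
      · exact ⟨0, hp⟩
      · exact ⟨1, hq⟩
      · exact ⟨2, ha'⟩
      · exact ⟨3, hb'⟩
      · exact ⟨4, hc'⟩
    intro u hu w hw
    obtain ⟨s, rfl⟩ := this u hu
    obtain ⟨t, rfl⟩ := this w hw
    exact hX s t
  have hpq : ChainPair r p q := by
    intro i j hij
    have := hφ i j hij
    rw [hp, hq]
    exact ⟨hx _ _ (by omega), hx _ _ (by omega), hx _ _ (by omega), hx _ _ (by omega)⟩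
  -- the squeezing lemma, with `z i = u i` and `z i = w i` allowed: by homogeneity such an
  -- equality holds for all `i` or for none
  have hbetween : ∀ u w z, u ∈ [p, q, a', b', c'] → w ∈ [p, q, a', b', c'] →
      z ∈ [p, q, a', b', c'] → ChainPair r u w → (∀ i, z i = u i ∨ r (u i) (z i)) →
      (∀ i, z i = w i ∨ r (z i) (w i)) → ChainPair r u z ∧ ChainPair r w z := by
    intro u w z hu hw hz h h1 h2
    by_cases hzu : ∃ i, z i = u i
    · obtain ⟨i, hi⟩ := hzu
      have hirr : ∀ j, z j = u j := by
        intro j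
        by_contra hne
        have h3 := (h1 j).resolve_left hne
        rw [((hH u hu z hz).2 j i).1, hi] at h3
        exact hT.1 _ h3
      have : z = u := funext hirr
      subst this
      exact ⟨fun i j hij => ⟨(h i j hij).1, (h i j hij).1, (h i j hij).1, (h i j hij).1⟩, h.symm⟩
    by_cases hzw : ∃ i, z i = w i
    · obtain ⟨i, hi⟩ := hzw
      have hirr : ∀ j, z j = w j := by
        intro j
        by_contra hne
        have h3 := (h2 j).resolve_left hne
        rw [((hH z hz w hw).2 j i).1, hi] at h3
        exact hT.1 _ h3
      have : z = w := funext hirr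
      subst this
      exact ⟨h, fun i j hij => ⟨(h i j hij).2.2.2, (h i j hij).2.2.2, (h i j hij).2.2.2,
        (h i j hij).2.2.2⟩⟩
    exact (h.squeeze hT (hH u hu w hw) (hH u hu z hz) (hH z hz u hu) (hH w hw z hz)
      (hH z hz w hw) (hH z hz z hz) (fun i => (h1 i).resolve_left fun h => hzu ⟨i, h⟩)
      (fun i => (h2 i).resolve_left fun h => hzw ⟨i, h⟩)).resolve_left hG
  have hpa := hbetween p q a' (by simp) (by simp) (by simp) hpq
    (fun i => by rw [ha', hp]; exact hap (φ i)) (fun i => by rw [ha', hq]; exact haq (φ i))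
  have hab' := (hbetween a' q b' (by simp) (by simp) (by simp) hpa.2.symm
    (fun i => by rw [ha', hb']; exact Or.inr (hab (φ i)))
    (fun i => by rw [hb', hq]; exact hbq (φ i))).1
  have hbc' := hbetween b' a' c' (by simp) (by simp) (by simp) hab'.symm
    (fun i => by rw [hb', hc']; exact Or.inr (hbc (φ i)))
    (fun i => by rw [hc', ha']; exact Or.inr (hca (φ i)))
  refine hG (expGrowth_of_cycles hT hab' hbc'.1 hbc'.2 fun i => ?_)
  rw [ha', hb', hc']
  exact ⟨hab _, hbc _, hca _⟩

/-! ### Reversing all edges -/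

lemma IsTournament.reverse {V : Type u} {r : V → V → Prop} (hT : IsTournament r) :
    IsTournament fun x y => r y x :=
  ⟨hT.1, fun x y hne => hT.2 y x hne.symm⟩

lemma Indecomposable.reverse {V : Type u} {r : V → V → Prop} (hT : IsTournament r)
    (h : Indecomposable r) : Indecomposable fun x y => r y x := by
  intro A hA
  refine h A fun x hx x' hx' y hy => ?_
  have hne : ∀ z ∈ A, z ≠ y := by
    rintro z hz rfl
    exact hy hz
  rw [hT.2 x y (hne x hx), hT.2 x' y (hne x' hx')]
  exact not_congr (hA x hx x' hx' y hy)

lemma inducedIso_reverse {V : Type u} (r : V → V → Prop) (s t : Finset V) :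
    InducedIso (fun x y => r y x) s t ↔ InducedIso r s t :=
  ⟨fun ⟨e, he⟩ => ⟨e, fun a b => he b a⟩, fun ⟨e, he⟩ => ⟨e, fun a b => he b a⟩⟩

lemma profile_reverse {V : Type u} (r : V → V → Prop) (n : ℕ) :
    profile (fun x y => r y x) n = profile r n := by
  simp only [profile, inducedIso_reverse]

/-- The profile of an infinite indecomposable tournament grows at least
exponentially. -/
theorem indecomposable_profile_exponential {V : Type u} (r : V → V → Prop)
    (hT : IsTournament r) (hInf : Infinite V) (hInd : Indecomposable r) :
    ∃ a c : ℝ, 0 < a ∧ 1 < c ∧ ∀ n : ℕ, a * c ^ n ≤ (profile r n : ℝ) := by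
  obtain ⟨φ, hφ, k, hk⟩ := exists_homogeneous_subseq
    fun i j => r (Infinite.natEmbedding V i) (Infinite.natEmbedding V j)
  by_cases h : k
  · refine expGrowth_of_chain hT hInf hInd (fun i => Infinite.natEmbedding V (φ i)) ?_
    intro i j hij
    rw [hk i j hij]
    exact h
    -- a decreasing sequence is an increasing one of the reversed tournament
  · have hrev := expGrowth_of_chain hT.reverse hInf (hInd.reverse hT)
      (fun i => Infinite.natEmbedding V (φ i)) fun i j hij => by
        refine hT.of_not (fun heq => ?_) ?_
        · exact (hφ i j hij).ne ((Infinite.natEmbedding V).injective heq)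
        · rw [hk i j hij]
          exact h
    simpa only [ExpGrowth, profile_reverse] using hrev
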